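/- Let k be a positive integer, f : Fin k → Fin k → Fin k a binary operation, and M : Matrix (Fin k) (Fin k × Fin k) ℝ its structure matrix, M i' (i,j) = if i' = f i j then 1 else 0. Define M ⊗ I_k : Matrix (Fin k × Fin k) ((Fin k × Fin k) × Fin k) ℝ by (M ⊗ I_k) (a,b) ((i,j),l) = M a (i,j) * (if b = l then 1 else 0), and I_k ⊗ M : Matrix (Fin k × Fin k) (Fin k × (Fin k × Fin k)) ℝ by (I_k ⊗ M) (a,b) (i,(j,l)) = (if a = i then 1 else 0) * M b (j,l). Then (M * (M ⊗ I_k)) ((i,j),l) entrywise equals (M * (I_k ⊗ M)) (i,(j,l)) for all i, j, l (i.e., M² = M(I_k ⊗ M) in semi-tensor product notation) if and only if f is associative, i.e., f (f x y) z = f x (f y z) for all x, y, z : Fin k. -/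

import Mathlib

/-!
Sending a map to its structure matrix turns composition into multiplication and `Prod.map` into the
Kronecker product, and is injective over a nontrivial semiring. Hence `M (M ⊗ I)` and `M (I ⊗ M)`
are the structure matrices of `((x, y), z) ↦ f (f x y) z` and `(x, (y, z)) ↦ f x (f y z)`, which
agree up to regrouping of the indices exactly when `f` is associative.
-/

open scoped Kronecker

section StructureMatrix

variable {l m n p R : Type*} [DecidableEq m]

/-- The structure matrix of a map `g : n → m`: column `j` is the standard basis vector at `g j`.
The structure matrix of a binary operation `f` is that of `Function.uncurry f`. Selecting columns of
the identity lets the composition laws come from those of `Matrix.submatrix`. -/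
def structureMatrix (R : Type*) [Zero R] [One R] (g : n → m) : Matrix m n R :=
  (1 : Matrix m m R).submatrix id g

theorem structureMatrix_apply [Zero R] [One R] (g : n → m) (i : m) (j : n) :
    structureMatrix R g i j = if i = g j then 1 else 0 :=
  Matrix.one_apply

theorem structureMatrix_id [Zero R] [One R] : structureMatrix R (id : m → m) = 1 :=
  Matrix.submatrix_id_id 1

theorem structureMatrix_submatrix [Zero R] [One R] (g : n → m) (h : l → n) :
    (structureMatrix R g).submatrix id h = structureMatrix R (g ∘ h) :=
  Matrix.submatrix_submatrix ..

theorem structureMatrix_injective [Zero R] [One R] [NeZero (1 : R)] :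
    Function.Injective (structureMatrix R : (n → m) → Matrix m n R) := by
  intro g h hgh
  funext j
  have entry_eq : structureMatrix R g (g j) j = structureMatrix R h (g j) j := by rw [hgh]
  by_contra hne
  simp [structureMatrix_apply, hne] at entry_eq

theorem structureMatrix_mul_structureMatrix [Fintype n] [DecidableEq n] [NonAssocSemiring R]
    (g : n → m) (h : l → n) :
    structureMatrix R g * structureMatrix R h = structureMatrix R (g ∘ h) :=
  (Matrix.mul_submatrix_one (Equiv.refl n) h (structureMatrix R g)).trans
    (structureMatrix_submatrix g h)

theorem structureMatrix_kronecker_structureMatrix [DecidableEq n] [MulZeroOneClass R]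
    (g : l → m) (h : p → n) :
    structureMatrix R g ⊗ₖ structureMatrix R h = structureMatrix R (Prod.map g h) := by
  simp only [structureMatrix, Matrix.kroneckerMap_submatrix_submatrix, Matrix.one_kronecker_one,
    Prod.map_id]

end StructureMatrix

section Associativity

variable {α R : Type*} [Fintype α] [DecidableEq α] [NonAssocSemiring R]

theorem structureMatrix_mul_kronecker_one (f : α → α → α) :
    structureMatrix R (Function.uncurry f) *
        (structureMatrix R (Function.uncurry f) ⊗ₖ (1 : Matrix α α R)) =
      structureMatrix R fun q : (α × α) × α ↦ f (f q.1.1 q.1.2) q.2 := by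
  rw [← structureMatrix_id, structureMatrix_kronecker_structureMatrix,
    structureMatrix_mul_structureMatrix]
  rfl

theorem structureMatrix_mul_one_kronecker (f : α → α → α) :
    structureMatrix R (Function.uncurry f) *
        ((1 : Matrix α α R) ⊗ₖ structureMatrix R (Function.uncurry f)) =
      structureMatrix R fun q : α × (α × α) ↦ f q.1 (f q.2.1 q.2.2) := by
  rw [← structureMatrix_id, structureMatrix_kronecker_structureMatrix,
    structureMatrix_mul_structureMatrix]
  rfl

theorem stmt6_general [Nontrivial R] (f : α → α → α) :
    structureMatrix R (Function.uncurry f) *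
          (structureMatrix R (Function.uncurry f) ⊗ₖ (1 : Matrix α α R)) =
        (structureMatrix R (Function.uncurry f) *
          ((1 : Matrix α α R) ⊗ₖ structureMatrix R (Function.uncurry f))).submatrix
            id (Equiv.prodAssoc α α α) ↔
      ∀ x y z : α, f (f x y) z = f x (f y z) := by
  rw [structureMatrix_mul_kronecker_one, structureMatrix_mul_one_kronecker,
    structureMatrix_submatrix, structureMatrix_injective.eq_iff, funext_iff, Prod.forall,
    Prod.forall]
  rfl

end Associativity

/-- `M² = M (I_k ⊗ M)` (entrywise, along the associativity bijection of index types)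
if and only if the binary operation `f` with structure matrix `M` is associative. -/
theorem stmt6 (k : ℕ) (hk : 0 < k) (f : Fin k → Fin k → Fin k)
    (M : Matrix (Fin k) (Fin k × Fin k) ℝ)
    (hM : ∀ (i' : Fin k) (p : Fin k × Fin k),
      M i' p = if i' = f p.1 p.2 then (1 : ℝ) else 0) :
    (∀ (a i j l : Fin k),
      (M * (Matrix.of fun (ab : Fin k × Fin k) (q : (Fin k × Fin k) × Fin k) =>
          M ab.1 q.1 * (if ab.2 = q.2 then (1 : ℝ) else 0))) a ((i, j), l)
      = (M * (Matrix.of fun (ab : Fin k × Fin k) (q : Fin k × (Fin k × Fin k)) =>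
          (if ab.1 = q.1 then (1 : ℝ) else 0) * M ab.2 q.2)) a (i, (j, l)))
    ↔ ∀ x y z : Fin k, f (f x y) z = f x (f y z) := by
  obtain rfl : M = structureMatrix ℝ (Function.uncurry f) := Matrix.ext hM
  simp only [← stmt6_general (R := ℝ) f, ← Matrix.ext_iff, Prod.forall]
  rfl
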